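/- Let λ ∈ 𝒫_X(n) and let ⟨λ,ν⟩ and ⟨λ,ν'⟩ be two reduced marked partitions of type X with the same underlying partition λ. Then d_S⟨λ,ν⟩ = d_S⟨λ,ν'⟩ if and only if ν = ν'. -/

import Mathlib

namespace NilDual

/-- A "partition" is encoded as a multiset of natural numbers (its parts). -/
abbrev Ptn := Multiset ℕ

/-- All parts are positive. -/
def IsPartition (l : Ptn) : Prop := ∀ a ∈ l, 0 < a

/-- `height l a` is the number of parts of `l` that are ≥ `a`. -/
def height (l : Ptn) (a : ℕ) : ℕ := Multiset.card (l.filter (fun p => a ≤ p))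

/-- `psum l j` is the sum of the `j` largest parts of `l`. -/
def psum (l : Ptn) (j : ℕ) : ℕ := ∑ a ∈ Finset.Icc 1 l.sum, min j (height l a)

/-- `Dom l m` means `l ≤ m` in the dominance order. -/
def Dom (l m : Ptn) : Prop := ∀ j : ℕ, psum l j ≤ psum m j

/-- The transpose (conjugate) partition. -/
def transpose (l : Ptn) : Ptn :=
  Multiset.filter (fun x => 0 < x)
    (Multiset.map (fun a => height l a) (Finset.Icc 1 l.sum).val)

/-- The largest part (0 for the empty partition). -/
def maxPart (l : Ptn) : ℕ := l.sup

/-- The smallest part (0 for the empty partition). -/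
noncomputable def minPart (l : Ptn) : ℕ := sInf {a : ℕ | a ∈ l}

/-- `λ⁺`: add 1 to the largest part. -/
def up (l : Ptn) : Ptn := (maxPart l + 1) ::ₘ l.erase (maxPart l)

/-- `λ⁻`: subtract 1 from the smallest part, deleting it if it becomes 0. -/
noncomputable def down (l : Ptn) : Ptn :=
  if minPart l ≤ 1 then l.erase (minPart l)
  else (minPart l - 1) ::ₘ l.erase (minPart l)

/-- The join `λ ∨ μ = (λ* ∪ μ*)*`. -/
def pjoin (l m : Ptn) : Ptn := transpose (transpose l + transpose m)

/-- `λ₋ = (λ*⁻)*`. -/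
noncomputable def lowerStar (l : Ptn) : Ptn := transpose (down (transpose l))

inductive PType | B | C | D
deriving DecidableEq

/-- Parts of this parity must occur with even multiplicity in a partition of type `X`. -/
def badPart : PType → ℕ → Prop
  | PType.B, a => Even a
  | PType.C, a => Odd a
  | PType.D, a => Even a

/-- Membership in `𝒫_X` (sum unconstrained). -/
def InP (X : PType) (l : Ptn) : Prop :=
  IsPartition l ∧ ∀ a : ℕ, badPart X a → Even (l.count a)

/-- The parity of `n` required for `𝒫_X(n)` to be defined. -/
def sumParity : PType → ℕ → Prop
  | PType.B, n => Odd n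
  | PType.C, n => Even n
  | PType.D, n => Even n

/-- `m` is the X-collapse of `l`: `m ∈ 𝒫_X(|l|)`, `m ≤ l` in dominance order, and `m`
dominates every member of `𝒫_X(|l|)` that is dominated by `l`. -/
def IsCollapse (X : PType) (l m : Ptn) : Prop :=
  InP X m ∧ m.sum = l.sum ∧ Dom m l ∧
    ∀ ν : Ptn, InP X ν → ν.sum = l.sum → Dom ν l → Dom ν m

def CollapseDefined (X : PType) (l : Ptn) : Prop := ∃ m, IsCollapse X l m

open Classical in
/-- The X-collapse `λ_X` (junk value `0` if it does not exist). -/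
noncomputable def collapse (X : PType) (l : Ptn) : Ptn :=
  if h : CollapseDefined X l then h.choose else 0

/-- `l` is superior to `m`: smallest part of `l` ≥ largest part of `m`. -/
def Superior (l m : Ptn) : Prop := maxPart m ≤ minPart l

def EvenlySuperior (l m : Ptn) : Prop := ∃ k : ℕ, Even k ∧ maxPart m ≤ k ∧ k ≤ minPart l

def OddlySuperior (l m : Ptn) : Prop := ∃ k : ℕ, Odd k ∧ maxPart m ≤ k ∧ k ≤ minPart l

/-- The parity required of marked parts in type `X`. -/
def markParity : PType → ℕ → Prop
  | PType.C, a => Even a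
  | _, a => Odd a

/-- `(ν, η)` is a marked partition of type `X`, with underlying partition `λ = ν + η`. -/
def IsMarked (X : PType) (nu eta : Ptn) : Prop :=
  InP X (nu + eta) ∧ sumParity X (nu + eta).sum ∧
  (∀ a ∈ nu, nu.count a = 1 ∧ markParity X a) ∧
  ((X = PType.B ∨ X = PType.D) → Even (Multiset.card nu))

/-- The Sommers duality map `d_S` on marked partitions `(ν, η)`. -/
noncomputable def dS (X : PType) (nu eta : Ptn) : Ptn :=
  match X with
  | PType.B => collapse PType.C (transpose (nu + collapse PType.C (down eta)))
  | PType.C => collapse PType.B (transpose (nu + collapse PType.B (up eta)))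
  | PType.D =>
      collapse PType.D (transpose (nu + transpose (collapse PType.D (transpose eta))))

/-- `a` is a markable part of `l` in type `X`. -/
def Markable (X : PType) (l : Ptn) (a : ℕ) : Prop :=
  a ∈ l ∧ markParity X a ∧
    (match X with
     | PType.B => Odd (height l a)
     | PType.C => Even (height l a)
     | PType.D => Even (height l a))

/-- The marked partition `⟨l, ν⟩` is reduced. -/
def Reduced (X : PType) (l nu : Ptn) : Prop := ∀ a ∈ nu, Markable X l a

/-- The parts entering the definition of a special marked partition:
even of odd height (B), odd of even height (C), even of even height (D). -/
def AntiPart (X : PType) (l : Ptn) (a : ℕ) : Prop :=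
  match X with
  | PType.B => Even a ∧ Odd (height l a)
  | PType.C => Odd a ∧ Even (height l a)
  | PType.D => Even a ∧ Even (height l a)

/-- The reduced marked partition `⟨l, ν⟩` is special. -/
def SpecialMP (X : PType) (l nu : Ptn) : Prop :=
  ∀ a ∈ l, AntiPart X l a → Even (height nu a)

/-- `a` is the largest part of `l` whose height satisfies `P`. -/
def LargestWith (l : Ptn) (P : ℕ → Prop) (a : ℕ) : Prop :=
  a ∈ l ∧ P (height l a) ∧ ∀ b ∈ l, P (height l b) → b ≤ a

/-- Height parity for the top marked part in a basic block. -/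
def heightParity : PType → ℕ → Prop
  | PType.B => fun n => Odd n
  | _ => fun n => Even n

/-- A basic block of type `X`. -/
def BasicBlock (X : PType) (nu eta : Ptn) : Prop :=
  IsMarked X nu eta ∧
  ((∃ n1 n2 : ℕ, n1 < n2 ∧ nu = {n2, n1} ∧ n1 = minPart (nu + eta) ∧
      LargestWith (nu + eta) (heightParity X) n2) ∨
   (X = PType.C ∧ ∃ n2 : ℕ, nu = {n2} ∧ LargestWith (nu + eta) (heightParity X) n2))

/-- An ultrabasic block: a basic block with `n₁ ≤ 1`. -/
def Ultrabasic (X : PType) (nu eta : Ptn) : Prop :=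
  BasicBlock X nu eta ∧ (Multiset.card nu = 2 → minPart nu ≤ 1)


/-! ## Helper functions -/

/-- `Σ min(p, a)`. -/
def TT (l : Ptn) (a : ℕ) : ℕ := (l.map (fun p => min p a)).sum

/-- The sum of the parts at least `a`. -/
def SS (l : Ptn) (a : ℕ) : ℕ := (l.filter (fun p => a ≤ p)).sum

/-- The parity twist. -/
def tw : PType → ℕ
  | PType.C => 0
  | _ => 1

theorem badPart_iff (X : PType) (a : ℕ) : badPart X a ↔ Odd (a + tw X) := by
  cases X <;> simp [badPart, tw] <;> grind

theorem height_add (l m : Ptn) (a : ℕ) : height (l + m) a = height l a + height m a := by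
  simp [height]

theorem height_cons (p : ℕ) (l : Ptn) (a : ℕ) :
    height (p ::ₘ l) a = (if a ≤ p then 1 else 0) + height l a := by
  unfold height
  rw [Multiset.filter_cons]
  split_ifs <;> simp [add_comm]

theorem TT_add (l m : Ptn) (a : ℕ) : TT (l + m) a = TT l a + TT m a := by
  simp [TT]

theorem TT_cons (p : ℕ) (l : Ptn) (a : ℕ) : TT (p ::ₘ l) a = min p a + TT l a := by
  simp [TT]

theorem SS_cons (p : ℕ) (l : Ptn) (a : ℕ) :
    SS (p ::ₘ l) a = (if a ≤ p then p else 0) + SS l a := by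
  unfold SS
  rw [Multiset.filter_cons]
  split_ifs <;> simp

theorem height_zero (a : ℕ) : height 0 a = 0 := by simp [height]
theorem TT_zero (a : ℕ) : TT 0 a = 0 := by simp [TT]
theorem SS_zero (a : ℕ) : SS 0 a = 0 := by simp [SS]

theorem TT_SS (l : Ptn) (a : ℕ) : TT l a + SS l a = l.sum + a * height l a := by
  induction l using Multiset.induction with
  | empty => simp [TT_zero, SS_zero, height_zero]
  | cons p l ih =>
    rw [TT_cons, SS_cons, height_cons, Multiset.sum_cons]
    split_ifs with h
    · rw [Nat.min_eq_right h]; linarith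
    · rw [Nat.min_eq_left (by omega)]; linarith

theorem height_succ (l : Ptn) (a : ℕ) : height l a = height l (a + 1) + l.count a := by
  induction l using Multiset.induction with
  | empty => simp [height_zero]
  | cons p l ih =>
    rw [height_cons, height_cons, ih, Multiset.count_cons]
    split_ifs <;> omega

theorem SS_succ (l : Ptn) (a : ℕ) : SS l a = SS l (a + 1) + a * l.count a := by
  induction l using Multiset.induction with
  | empty => simp [SS_zero]
  | cons p l ih =>
    rw [SS_cons, SS_cons, ih, Multiset.count_cons]
    split_ifs <;> first | omega | (subst_vars; ring)

theorem TT_succ (l : Ptn) (a : ℕ) : TT l (a + 1) = TT l a + height l (a + 1) := by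
  induction l using Multiset.induction with
  | empty => simp [TT_zero, height_zero]
  | cons p l ih =>
    rw [TT_cons, TT_cons, height_cons, ih]
    split_ifs <;> omega

theorem TT_at_zero (l : Ptn) : TT l 0 = 0 := by
  simp [TT]

theorem TT_eq_sum (l : Ptn) (a : ℕ) : TT l a = ∑ b ∈ Finset.range a, height l (b + 1) := by
  induction a with
  | zero => simp [TT_at_zero]
  | succ a ih => rw [TT_succ, Finset.sum_range_succ, ih]

theorem height_anti (l : Ptn) {a b : ℕ} (h : a ≤ b) : height l b ≤ height l a := by
  induction b, h using Nat.le_induction with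
  | base => exact le_rfl
  | succ b _ ih => have := height_succ l b; omega

theorem height_large (l : Ptn) {a : ℕ} (h : l.sum < a) : height l a = 0 := by
  unfold height
  rw [Multiset.card_eq_zero, Multiset.filter_eq_nil]
  intro p hp
  have := Multiset.le_sum_of_mem hp
  omega

theorem SS_large (l : Ptn) {a : ℕ} (h : l.sum < a) : SS l a = 0 := by
  unfold SS
  rw [Multiset.filter_eq_nil.2]
  · rfl
  intro p hp
  have := Multiset.le_sum_of_mem hp
  omega

theorem TT_large (l : Ptn) {a : ℕ} (h : l.sum ≤ a) : TT l a = l.sum := by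
  have h1 := TT_SS l (a+1)
  have h2 := TT_succ l a
  rw [SS_large l (by omega), height_large l (by omega)] at h1
  rw [height_large l (by omega)] at h2
  simp at h1
  omega

theorem psum_eq (l : Ptn) (j N : ℕ) (h : l.sum ≤ N) :
    psum l j = ∑ b ∈ Finset.range N, min j (height l (b + 1)) := by
  obtain ⟨c, rfl⟩ := Nat.exists_eq_add_of_le h
  rw [Finset.sum_range_add]
  have : ∑ x ∈ Finset.range c, min j (height l (l.sum + x + 1)) = 0 := by
    apply Finset.sum_eq_zero
    intro x _
    rw [height_large l (by omega)]; simp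
  rw [this, psum, add_zero, Finset.range_eq_Ico,
    Finset.sum_Ico_add' (fun b => min j (height l b)) 0 l.sum 1]
  rfl

theorem dual_le (l : Ptn) (j a : ℕ) : psum l j + TT l a ≤ l.sum + j * a := by
  have hS : l.sum = ∑ x ∈ Finset.range a, height l (x + 1) +
      ∑ x ∈ Finset.range l.sum, height l (a + x + 1) := by
    have := TT_large l (a := a + l.sum) (by omega)
    rwa [TT_eq_sum, Finset.sum_range_add, eq_comm] at this
  rw [psum_eq l j (a + l.sum) (by omega), TT_eq_sum l a, Finset.sum_range_add]
  have h1 : ∑ x ∈ Finset.range a, min j (height l (x + 1)) ≤ j * a := by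
    calc _ ≤ ∑ x ∈ Finset.range a, j := Finset.sum_le_sum (fun i _ => min_le_left _ _)
      _ = _ := by simp [mul_comm]
  have h2 : ∑ x ∈ Finset.range l.sum, min j (height l (a + x + 1)) ≤
    ∑ x ∈ Finset.range l.sum, height l (a + x + 1) := Finset.sum_le_sum (fun i _ => min_le_right _ _)
  omega

theorem dual_eq (l : Ptn) (j a : ℕ) (h1 : a = 0 ∨ j ≤ height l a) (h2 : height l (a + 1) ≤ j) :
    psum l j + TT l a = l.sum + j * a := by
  have hS : l.sum = ∑ x ∈ Finset.range a, height l (x + 1) +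
      ∑ x ∈ Finset.range l.sum, height l (a + x + 1) := by
    have := TT_large l (a := a + l.sum) (by omega)
    rwa [TT_eq_sum, Finset.sum_range_add, eq_comm] at this
  rw [psum_eq l j (a + l.sum) (by omega), TT_eq_sum l a, Finset.sum_range_add]
  have h1 : ∑ x ∈ Finset.range a, min j (height l (x + 1)) = j * a := by
    calc _ = ∑ x ∈ Finset.range a, j := by
            apply Finset.sum_congr rfl
            intro i hi
            simp at hi
            have := height_anti l (show i + 1 ≤ a by omega)
            omega
      _ = _ := by simp [mul_comm]
  have h2 : ∑ x ∈ Finset.range l.sum, min j (height l (a + x + 1)) =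
    ∑ x ∈ Finset.range l.sum, height l (a + x + 1) := by
    apply Finset.sum_congr rfl
    intro i hi
    have := height_anti l (show a + 1 ≤ a + i + 1 by omega)
    omega
  omega

theorem pt_exists (l : Ptn) (j : ℕ) : ∃ a, height l (a + 1) ≤ j :=
  ⟨l.sum, by rw [height_large l (by omega)]; omega⟩

/-- The `j`-th part (0-indexed). -/
def pt (l : Ptn) (j : ℕ) : ℕ := Nat.find (pt_exists l j)

theorem lt_pt (l : Ptn) (a j : ℕ) : a < pt l j ↔ j < height l (a + 1) := by
  unfold pt
  rw [Nat.lt_find_iff]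
  constructor
  · intro h; have := h a le_rfl; omega
  · intro h m hm
    have := height_anti l (show m + 1 ≤ a + 1 by omega)
    omega

theorem pt_spec1 (l : Ptn) (j : ℕ) : height l (pt l j + 1) ≤ j := Nat.find_spec (pt_exists l j)

theorem pt_spec2 (l : Ptn) (j : ℕ) : pt l j = 0 ∨ j + 1 ≤ height l (pt l j) := by
  rcases h : pt l j with _ | a
  · simp
  · right
    exact (lt_pt l a j).1 (by omega)

theorem psum_succ (l : Ptn) (j : ℕ) : psum l (j + 1) = psum l j + pt l j := by
  have h1 := pt_spec1 l j
  have h2 := pt_spec2 l j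
  have e1 := dual_eq l j (pt l j) (by omega) h1
  have e2 := dual_eq l (j+1) (pt l j) (by omega) (by omega)
  rw [Nat.add_mul] at e2
  omega

theorem psum_zero (l : Ptn) : psum l 0 = 0 := by simp [psum]

theorem pt_anti (l : Ptn) : Antitone (pt l) := by
  intro i j h
  by_contra hc
  push Not at hc
  have := (lt_pt l _ _).1 hc
  have := pt_spec1 l i
  omega

theorem psum_height (l : Ptn) (a : ℕ) : psum l (height l a) = SS l a := by
  have := dual_eq l (height l a) a (Or.inr le_rfl) (height_anti l (by omega))
  have := TT_SS l a
  rw [mul_comm] at this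
  omega

theorem psum_large (l : Ptn) {j : ℕ} (h : pt l j = 0) : psum l j = l.sum := by
  have h1 := pt_spec1 l j
  rw [h] at h1
  have := dual_eq l j 0 (Or.inl rfl) h1
  simpa [TT_at_zero] using this

theorem pt_card (l : Ptn) {j : ℕ} (h : height l 1 ≤ j) : pt l j = 0 := by
  by_contra hc
  have := (lt_pt l 0 j).1 (by omega)
  simp at this
  omega

theorem psum_of_seq (d : ℕ → ℕ) (hd : Antitone d) (N : ℕ) (hN : ∀ i, N ≤ i → d i = 0) (j : ℕ) :
    psum (Multiset.filter (fun x => 0 < x) (Multiset.map d (Multiset.range N))) j =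
      ∑ i ∈ Finset.range j, d i := by
  set M := Multiset.filter (fun x => 0 < x) (Multiset.map d (Multiset.range N)) with hM
  have hh : ∀ b, height M (b + 1) = ((Finset.range N).filter (fun i => b < d i)).card := by
    intro b
    rw [hM, height, Multiset.filter_filter, Multiset.filter_map, Multiset.card_map, Finset.card,
      Finset.filter_val, Finset.range_val]
    congr 1
    apply Multiset.filter_congr
    intro x _
    simp; omega
  have hm : ∀ b, min j (height M (b + 1)) = ((Finset.range j).filter (fun i => b < d i)).card := by
    intro b
    rw [hh]
    obtain ⟨c, hc⟩ : ∃ c, ∀ i, b < d i ↔ i < c := by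
      have hex : ∃ i, d i ≤ b := ⟨N, by rw [hN N le_rfl]; omega⟩
      refine ⟨Nat.find hex, fun i => ?_⟩
      rw [Nat.lt_find_iff]
      constructor
      · intro h m hm
        have := hd hm
        omega
      · intro h; have := h i le_rfl; omega
    have hcN : c ≤ N := by
      by_contra hcc
      have := (hc N).2 (by omega)
      rw [hN N le_rfl] at this
      omega
    have key : ∀ K, ((Finset.range K).filter (fun i => b < d i)).card = min K c := by
      intro K
      have : (Finset.range K).filter (fun i => b < d i) = Finset.range (min K c) := by
        ext i; simp [hc]
      rw [this, Finset.card_range]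
    rw [key, key]
    omega
  rw [psum_eq M j (M.sum + d 0) (by omega), Finset.sum_congr rfl (fun b _ => hm b)]
  simp_rw [Finset.card_filter]
  rw [Finset.sum_comm]
  apply Finset.sum_congr rfl
  intro i _
  have h0 : d i ≤ d 0 := hd (Nat.zero_le i)
  rw [← Finset.card_filter]
  have : (Finset.range (M.sum + d 0)).filter (fun x => x < d i) = Finset.range (d i) := by
    ext x; simp; omega
  rw [this, Finset.card_range]

theorem sum_of_seq (d : ℕ → ℕ) (N : ℕ) :
    (Multiset.filter (fun x => 0 < x) (Multiset.map d (Multiset.range N))).sum =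
      ∑ i ∈ Finset.range N, d i := by
  have : ∀ m : Multiset ℕ, (Multiset.filter (fun x => 0 < x) m).sum = m.sum := by
    intro m
    induction m using Multiset.induction with
    | empty => simp
    | cons p m ih =>
      rw [Multiset.filter_cons]
      split_ifs with h
      · simp [ih]
      · have : p = 0 := by omega
        simp [ih, this]
  rw [this]
  rfl

theorem transpose_eq (l : Ptn) : transpose l = Multiset.filter (fun x => 0 < x)
    (Multiset.map (fun i => height l (i + 1)) (Multiset.range l.sum)) := by
  unfold transpose
  congr 1
  have : (Finset.Icc 1 l.sum).val = (Multiset.range l.sum).map (fun i => i + 1) := by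
    have : Finset.Icc 1 l.sum = (Finset.range l.sum).map (addRightEmbedding 1) := by
      ext x; simp
      constructor
      · intro h; exact ⟨x - 1, by omega, by omega⟩
      · rintro ⟨a, h1, rfl⟩; omega
    rw [this]; rfl
  rw [this, Multiset.map_map]
  rfl

theorem psum_transpose (l : Ptn) (j : ℕ) : psum (transpose l) j = TT l j := by
  rw [transpose_eq, psum_of_seq (fun i => height l (i + 1)) _ l.sum _ j, TT_eq_sum]
  · intro i j h; exact height_anti l (by omega)
  · intro i h; exact height_large l (by omega)

theorem sum_transpose (l : Ptn) : (transpose l).sum = l.sum := by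
  rw [transpose_eq, sum_of_seq (fun i => height l (i + 1)), ← TT_eq_sum, TT_large l le_rfl]

theorem TT_transpose (l : Ptn) (j : ℕ) : TT (transpose l) j = psum l j := by
  have : ∀ m : Multiset ℕ, TT (Multiset.filter (fun x => 0 < x) m) j = TT m j := by
    intro m
    induction m using Multiset.induction with
    | empty => simp
    | cons p m ih =>
      rw [Multiset.filter_cons]
      split_ifs with h
      · simp [ih, TT_cons]
      · have : p = 0 := by omega
        simp [ih, this, TT_cons]
  rw [transpose, this, TT, Multiset.map_map, psum]
  unfold Finset.sum
  congr 1
  apply Multiset.map_congr rfl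
  intro x _
  simp [min_comm]

/-! ## Parity -/

theorem InP_SS {X : PType} {l : Ptn} (h : InP X l) (a : ℕ) :
    Even (SS l a + tw X * height l a) := by
  by_cases ha : l.sum < a
  · rw [SS_large l ha, height_large l ha]; simp
  · have ih := InP_SS h (a + 1)
    rw [SS_succ, height_succ]
    have : SS l (a + 1) + a * Multiset.count a l + tw X * (height l (a + 1) + Multiset.count a l) =
      (SS l (a + 1) + tw X * height l (a + 1)) + Multiset.count a l * (a + tw X) := by ring
    rw [this]
    apply ih.add
    have := h.2 a
    rw [badPart_iff] at this
    rcases Nat.even_or_odd (a + tw X) with h1 | h1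
    · exact h1.mul_left _
    · exact (this h1).mul_right _
termination_by l.sum + 1 - a

theorem InP_flat {X : PType} {l : Ptn} (h : InP X l) (j : ℕ)
    (ho : Odd (psum l (j + 1) + tw X * (j + 1))) :
    pt l j = pt l (j + 1) ∧ Odd (pt l j + tw X) := by
  set a := pt l j with ha
  have h1 := pt_spec1 l j
  have h2 := pt_spec2 l j
  rw [← ha] at h1 h2
  have e := dual_eq l (j + 1) a (by omega) (by omega)
  have e1 := TT_SS l (a + 1)
  have e2 := TT_succ l a
  have e3 := InP_SS h (a + 1)
  set t := tw X
  set i := height l (a + 1)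
  have e4 : psum l (j + 1) + a * i = (j + 1) * a + SS l (a + 1) := by
    rw [Nat.add_mul] at e1
    omega
  have e5 : Odd ((j + 1 + i) * (a + t)) := by
    have : psum l (j + 1) + t * (j + 1) + 2 * (a * i) + (SS l (a+1) + t * i)
      = (j + 1 + i) * (a + t) + 2 * SS l (a+1) := by linarith
    have e6 : Odd ((j + 1 + i) * (a + t) + 2 * SS l (a+1)) := by
      rw [← this]; exact (ho.add_even (even_two_mul _)).add_even e3
    rcases Nat.even_or_odd ((j + 1 + i) * (a + t)) with h | h
    · exact absurd (h.add (even_two_mul _)) (Nat.not_even_iff_odd.2 e6)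
    · exact h
  rw [Nat.odd_mul] at e5
  refine ⟨?_, e5.2⟩
  have hle : pt l (j + 1) ≤ a := pt_anti l (by omega)
  apply le_antisymm _ hle
  rcases Nat.eq_zero_or_pos a with h0 | h0
  · omega
  · have hc := h.2 a ((badPart_iff X a).2 e5.2)
    have hs := height_succ l a
    have hne : height l a ≠ j + 1 := by
      intro hq
      have := e5.1
      grind
    obtain ⟨b, hb⟩ : ∃ b, a = b + 1 := ⟨a - 1, by omega⟩
    have := (lt_pt l b (j+1)).2 (by rw [← hb]; omega)
    omega

theorem InP_of_flat {X : PType} {l : Ptn} (hp : IsPartition l)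
    (h : ∀ j, Odd (psum l (j + 1) + tw X * (j + 1)) → pt l j = pt l (j + 1)) : InP X l := by
  refine ⟨hp, ?_⟩
  have key : ∀ a, 1 ≤ a → Even (SS l a + tw X * height l a) := by
    intro a ha
    by_contra hc
    rw [Nat.not_even_iff_odd, ← psum_height] at hc
    rcases hj : height l a with _ | j
    · rw [hj, psum_zero] at hc; simp at hc
    · rw [hj] at hc
      have := h j hc
      obtain ⟨b, rfl⟩ : ∃ b, a = b + 1 := ⟨a - 1, by omega⟩
      have h1 := (lt_pt l b j).2 (by omega)
      have h2 := (lt_pt l b (j+1)).not.2 (by omega)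
      omega
  intro a hb
  rw [badPart_iff] at hb
  rcases Nat.eq_zero_or_pos a with h0 | h0
  · rw [Multiset.count_eq_zero_of_notMem]
    · simp
    · intro hm; have := hp a hm; omega
  · have k1 := key a h0
    have k2 := key (a + 1) (by omega)
    rw [SS_succ, height_succ] at k1
    have : SS l (a + 1) + a * Multiset.count a l + tw X * (height l (a + 1) + Multiset.count a l) =
      (SS l (a + 1) + tw X * height l (a + 1)) + Multiset.count a l * (a + tw X) := by ring
    rw [this, Nat.even_add] at k1
    have := k1.1 k2
    rw [Nat.even_mul] at this
    rcases this with h | h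
    · exact h
    · exact absurd h (Nat.not_even_iff_odd.2 hb)

/-! ## The explicit collapse -/

open Classical in
/-- The correction to the partial sums. -/
noncomputable def dl (t : ℕ) (s p : ℕ → ℕ) (j : ℕ) : ℕ :=
  if Odd (s j + t * j) ∧ ¬ (p (j - 1) = p j ∧ Odd (p j + t)) then 1 else 0

theorem collapse_seq (t : ℕ) (s p : ℕ → ℕ) (h0 : s 0 = 0) (hs : ∀ j, s (j + 1) = s j + p j)
    (hp : Antitone p) (ht : ∀ j, p j = 0 → Even t → Even (s j)) :
    ∃ d : ℕ → ℕ, Antitone d ∧ (∀ j, ∑ i ∈ Finset.range j, d i + dl t s p j = s j) ∧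
      (∀ j, Odd (∑ i ∈ Finset.range (j + 1), d i + t * (j + 1)) → d j = d (j + 1)) ∧
      (∀ j, p j = 0 → d (j + 1) = 0) := by
  have hd0 : dl t s p 0 = 0 := by simp [dl, h0]
  have hle : ∀ j, dl t s p j ≤ 1 := by intro j; unfold dl; split_ifs <;> omega
  have h1 : ∀ j, dl t s p (j + 1) = 1 ↔
      (Odd (s j + p j + t * j + t) ∧ ¬ (p j = p (j + 1) ∧ Odd (p (j + 1) + t))) := by
    intro j; unfold dl
    rw [hs, show s j + p j + t * (j + 1) = s j + p j + t * j + t by ring]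
    simp
  have hdef : ∀ j, dl t s p j = 1 ↔
      (Odd (s j + t * j) ∧ ¬ (p (j - 1) = p j ∧ Odd (p j + t))) := by
    intro j; unfold dl
    simp
  have hmul : ∀ j, t % 2 = 0 → (t * j) % 2 = 0 := by
    intro j h; rw [Nat.mul_mod, h]; simp
  simp only [Nat.odd_iff, Nat.even_iff] at h1 hdef ht ⊢
  have hpos : ∀ j, dl t s p (j + 1) ≤ p j + dl t s p j := by
    intro j
    by_contra hc
    have a1 := hle (j + 1)
    have a2 := (h1 j).1 (by omega)
    have a3 : p j = 0 := by omega
    have a4 := hp (show j ≤ j + 1 by omega)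
    have a5 := ht j a3
    have a6 := hmul j
    omega
  have hsum : ∀ j, ∑ i ∈ Finset.range j, (p i + dl t s p i - dl t s p (i + 1)) + dl t s p j = s j := by
    intro j
    induction j with
    | zero => simp [h0, hd0]
    | succ j ih =>
      rw [Finset.sum_range_succ, hs]
      have := hpos j
      omega
  refine ⟨fun j => p j + dl t s p j - dl t s p (j + 1), ?_, hsum, ?_, ?_⟩
  · apply antitone_nat_of_succ_le
    intro j
    have b1 := hp (show j ≤ j + 1 by omega)
    have c1 := h1 j
    have c2 := h1 (j + 1)
    have c0 := hdef j
    have q1 := hle j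
    have q2 := hle (j + 1)
    have q3 := hle (j + 2)
    have r1 := hpos j
    have r2 := hpos (j + 1)
    rw [hs, mul_add] at c2
    suffices p (j+1) + 2 * dl t s p (j + 1) ≤ p j + dl t s p j + dl t s p (j + 2) by
      show p (j+1) + dl t s p (j + 1) - dl t s p (j + 2) ≤ p j + dl t s p j - dl t s p (j + 1)
      omega
    rw [show j + 1 + 1 = j + 2 by rfl] at c2
    by_cases hz : dl t s p (j + 1) = 1
    · have c1' := c1.1 hz
      by_cases hj2 : p (j + 1) + 2 ≤ p j
      · omega
      · by_cases hj0 : p j = p (j + 1)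
        · have : dl t s p j = 1 := c0.2 (by omega)
          have : dl t s p (j + 2) = 1 := c2.2 (by omega)
          omega
        · have hj1 : p j = p (j + 1) + 1 := by omega
          rcases Nat.mod_two_eq_zero_or_one (p j + t) with he | he
          · have : dl t s p j = 1 := c0.2 (by omega)
            omega
          · have : dl t s p (j + 2) = 1 := c2.2 (by omega)
            omega
    · omega
  · intro j ho
    beta_reduce at ho
    have hq := hsum (j + 1)
    have c1 := h1 j
    have c2 := h1 (j + 1)
    have c0 := hdef j
    have q1 := hle j
    have q2 := hle (j + 1)
    have q3 := hle (j + 2)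
    rw [hs, mul_add] at c2
    rw [show j + 1 + 1 = j + 2 by rfl] at c2
    rw [hs] at hq
    rw [show t * (j + 1) = t * j + t by ring] at ho
    have z1 : dl t s p (j + 1) = 0 := by
      by_contra hz
      have := c1.1 (by omega)
      omega
    rw [z1, add_zero] at hq
    rw [hq] at ho
    have hfl : p j = p (j + 1) ∧ (p (j + 1) + t) % 2 = 1 := by
      by_contra hz
      have := c1.2 ⟨by omega, hz⟩
      omega
    have z0 : dl t s p j = 0 := by
      by_contra hz
      have := c0.1 (by omega)
      omega
    have z2 : dl t s p (j + 2) = 0 := by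
      by_contra hz
      have := c2.1 (by omega)
      omega
    show p j + dl t s p j - dl t s p (j + 1) = p (j+1) + dl t s p (j + 1) - dl t s p (j + 2)
    omega
  · intro j hj
    have b1 := hp (show j ≤ j + 1 by omega)
    have c1 := h1 j
    have q2 := hle (j + 1)
    have z1 : dl t s p (j + 1) = 0 := by
      by_contra hz
      have := c1.1 (by omega)
      have := ht j hj
      have := hmul j
      omega
    show p (j+1) + dl t s p (j + 1) - dl t s p (j + 2) = 0
    omega

theorem exists_collapse (X : PType) (l : Ptn) (hl : X = PType.C → Even l.sum) :
    ∃ m, IsCollapse X l m ∧ ∀ j x, x ≤ psum l j → Even (x + tw X * j) → x ≤ psum m j := by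
  obtain ⟨d, hd, hsum, hflat, hz⟩ := collapse_seq (tw X) (psum l) (pt l) (psum_zero l)
    (psum_succ l) (pt_anti l) (by
      intro j hj he
      rw [psum_large l hj]
      apply hl
      cases X <;> simp [tw] at he ⊢)
  set N := height l 1 + 1 with hN
  have hdN : ∀ i, N ≤ i → d i = 0 := by
    intro i hi
    obtain ⟨k, rfl⟩ : ∃ k, i = k + 1 := ⟨i - 1, by omega⟩
    exact hz k (pt_card l (by omega))
  set m := Multiset.filter (fun x => 0 < x) (Multiset.map d (Multiset.range N)) with hm
  have hps : ∀ j, psum m j = ∑ i ∈ Finset.range j, d i := psum_of_seq d hd N hdN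
  have hpt : ∀ j, pt m j = d j := by
    intro j
    have := psum_succ m j
    rw [hps, hps, Finset.sum_range_succ] at this
    omega
  have hodd : ∀ j, dl (tw X) (psum l) (pt l) j ≤ 1 := by
    intro j; unfold dl; split_ifs <;> omega
  have hsm : m.sum = l.sum := by
    rw [hm, sum_of_seq]
    have h1 := hsum (N + 1)
    rw [Finset.sum_range_succ, hdN N le_rfl, psum_large l (pt_card l (by omega))] at h1
    have h2 : dl (tw X) (psum l) (pt l) (N + 1) = 0 := by
      have a1 : pt l N = 0 := pt_card l (by omega)
      have a2 : pt l (N + 1) = 0 := pt_card l (by omega)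
      unfold dl
      rw [if_neg]
      rintro ⟨h3, h4⟩
      rw [psum_large l a2] at h3
      simp only [Nat.add_sub_cancel, a1, a2] at h4
      cases X <;> simp [tw] at h3 h4 hl
      grind
    omega
  have hdom : Dom m l := by
    intro j
    rw [hps]
    have := hsum j
    omega
  have hin : InP X m := by
    apply InP_of_flat
    · intro a ha
      rw [hm, Multiset.mem_filter] at ha
      exact ha.2
    · intro j hj
      rw [hpt, hpt]
      rw [hps] at hj
      exact hflat j hj
  refine ⟨m, ⟨hin, hsm, hdom, ?_⟩, ?_⟩
  · intro v hv hvs hvd j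
    rcases j with _ | j
    · rw [psum_zero, psum_zero]
    rw [hps]
    by_contra hc
    have h1 := hsum (j + 1)
    have h2 := hvd (j + 1)
    have h3 := hodd (j + 1)
    have h4 : dl (tw X) (psum l) (pt l) (j + 1) = 1 := by omega
    have h5 : psum v (j + 1) = psum l (j + 1) := by omega
    unfold dl at h4
    simp only [Nat.add_sub_cancel, ite_eq_left_iff] at h4
    have h6 : Odd (psum l (j + 1) + tw X * (j + 1)) ∧
        ¬ (pt l j = pt l (j + 1) ∧ Odd (pt l (j + 1) + tw X)) := by
      by_contra hq
      exact absurd (h4 hq) (by omega)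
    obtain ⟨f1, f2⟩ := InP_flat hv j (by rw [h5]; exact h6.1)
    apply h6.2
    have g1 := psum_succ v j
    have g2 := psum_succ v (j + 1)
    have g3 := psum_succ l j
    have g4 := psum_succ l (j + 1)
    have g5 := hvd j
    have g6 := hvd (j + 1 + 1)
    have g7 := pt_anti l (show j ≤ j + 1 by omega)
    have g8 : pt l (j + 1) = pt v j := by omega
    exact ⟨by omega, by rw [g8]; exact f2⟩
  · intro j x hx he
    rw [hps]
    by_contra hc
    have h1 := hsum j
    have h3 := hodd j
    have h4 : dl (tw X) (psum l) (pt l) j = 1 := by omega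
    have h5 : x = psum l j := by omega
    unfold dl at h4
    simp only [ite_eq_left_iff] at h4
    rw [h5] at he
    have := h4 (by intro hq; exact absurd he (Nat.not_even_iff_odd.2 hq.1))
    omega

theorem collapse_spec (X : PType) (l : Ptn) (hl : X = PType.C → Even l.sum) :
    InP X (collapse X l) ∧ (collapse X l).sum = l.sum ∧ Dom (collapse X l) l ∧
      ∀ j x, x ≤ psum l j → Even (x + tw X * j) → x ≤ psum (collapse X l) j := by
  obtain ⟨m, hm, hx⟩ := exists_collapse X l hl
  have hdef : CollapseDefined X l := ⟨m, hm⟩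
  have hc : IsCollapse X l (collapse X l) := by
    unfold collapse
    rw [dif_pos hdef]
    exact hdef.choose_spec
  exact ⟨hc.1, hc.2.1, hc.2.2.1, fun j x h1 h2 => (hx j x h1 h2).trans
    (hc.2.2.2 m hm.1 hm.2.1 hm.2.2.1 j)⟩

theorem TT_of_dom {l m : Ptn} (hs : l.sum = m.sum) (hd : Dom l m) (a : ℕ) : TT m a ≤ TT l a := by
  have h1 := dual_eq l (height l a) a (Or.inr le_rfl) (height_anti l (by omega))
  have h2 := dual_le m (height l a) a
  have h3 := hd (height l a)
  omega

theorem TT_collapse_le (X : PType) (l : Ptn) (hl : X = PType.C → Even l.sum) (a : ℕ)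
    (he : Even (SS l a + tw X * height l a)) : TT (collapse X l) a ≤ TT l a := by
  obtain ⟨_, hs, _, hx⟩ := collapse_spec X l hl
  have h1 := dual_eq l (height l a) a (Or.inr le_rfl) (height_anti l (by omega))
  have h2 := dual_le (collapse X l) (height l a) a
  rw [← psum_height] at he
  have h3 := hx _ _ le_rfl he
  omega

/-! ## The three key computations -/

theorem height_parity_of_mark {nu : Ptn} {j : ℕ} (h : j ∉ nu) : height nu j = height nu (j + 1) := by
  rw [height_succ, Multiset.count_eq_zero_of_notMem h]; rfl

theorem even_sum_of_even {nu : Ptn} (h : ∀ a ∈ nu, Even a) : Even nu.sum := by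
  induction nu using Multiset.induction with
  | empty => simp
  | cons p l ih =>
    rw [Multiset.sum_cons]
    exact (h p (by simp)).add (ih fun a ha => h a (by simp [ha]))

theorem sum_card_of_odd {nu : Ptn} (h : ∀ a ∈ nu, Odd a) : Even (nu.sum + Multiset.card nu) := by
  induction nu using Multiset.induction with
  | empty => simp
  | cons p l ih =>
    rw [Multiset.sum_cons, Multiset.card_cons]
    have := h p (by simp)
    have := ih fun a ha => h a (by simp [ha])
    grind

theorem InP_eta {X : PType} {nu eta : Ptn} (h : IsMarked X nu eta) : InP X eta := by
  refine ⟨fun a ha => h.1.1 a (by simp [ha]), fun a ha => ?_⟩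
  have h1 := h.1.2 a ha
  rw [Multiset.count_add, Multiset.count_eq_zero_of_notMem, zero_add] at h1
  · exact h1
  · intro hm
    have := (h.2.2.1 a hm).2
    cases X <;> simp [markParity, badPart] at ha this <;> grind

theorem down_spec {eta : Ptn} (h : IsPartition eta) (h0 : eta ≠ 0) :
    ∃ m rho, 1 ≤ m ∧ eta = m ::ₘ rho ∧ (∀ a ∈ rho, m ≤ a) ∧ (down eta).sum = rho.sum + (m - 1) ∧
      (∀ j, TT (down eta) j = min (m - 1) j + TT rho j) ∧
      (∀ j, 1 ≤ j → SS (down eta) j = (if j ≤ m - 1 then m - 1 else 0) + SS rho j) := by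
  have hne : {a : ℕ | a ∈ eta}.Nonempty := Multiset.exists_mem_of_ne_zero h0
  have hmem : minPart eta ∈ eta := Nat.sInf_mem hne
  have hmin : ∀ a ∈ eta, minPart eta ≤ a := fun a ha => Nat.sInf_le ha
  set m := minPart eta with hm
  refine ⟨m, eta.erase m, h m hmem, (Multiset.cons_erase hmem).symm,
    fun a ha => hmin a (Multiset.mem_of_mem_erase ha), ?_⟩
  have h1 := h m hmem
  unfold down
  rw [← hm]
  split_ifs with hle
  · have : m = 1 := by omega
    refine ⟨by simp [this], fun j => by simp [this], fun j hj => ?_⟩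
    rw [if_neg (by omega), zero_add]
  · refine ⟨by simp [add_comm], fun j => TT_cons _ _ _, fun j _ => SS_cons _ _ _⟩

theorem up_spec {eta : Ptn} (h0 : eta ≠ 0) :
    ∃ m rho, eta = m ::ₘ rho ∧ (∀ a ∈ rho, a ≤ m) ∧ up eta = (m + 1) ::ₘ rho := by
  have hmem : maxPart eta ∈ eta := by
    have : ∀ l : Multiset ℕ, l ≠ 0 → l.sup ∈ l := by
      intro l
      induction l using Multiset.induction with
      | empty => simp
      | cons p l ih =>
        intro _
        rw [Multiset.sup_cons]
        by_cases hl : l = 0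
        · subst hl; simp
        · have := ih hl
          rcases le_total p l.sup with h | h
          · rw [sup_of_le_right h]; simp [this]
          · rw [sup_of_le_left h]; simp
    exact this eta h0
  exact ⟨maxPart eta, eta.erase (maxPart eta), (Multiset.cons_erase hmem).symm,
    fun a ha => Multiset.le_sup (Multiset.mem_of_mem_erase ha), rfl⟩

theorem key_B (nu eta : Ptn) (h : IsMarked PType.B nu eta) (j : ℕ) (hj : 1 ≤ j) (hje : Even j)
    (hh : Odd (height (nu + eta) j)) :
    Even (height nu j) ↔ TT (nu + eta) j ≤ psum (dS PType.B nu eta) j := by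
  have hin := InP_eta h
  have hse : Odd eta.sum ∧ Even nu.sum := by
    have h1 := h.2.1
    have h2 := sum_card_of_odd (fun a ha => (h.2.2.1 a ha).2 : ∀ a ∈ nu, Odd a)
    have h3 := h.2.2.2 (Or.inl rfl)
    simp [sumParity] at h1
    grind
  have he0 : eta ≠ 0 := by rintro rfl; simp at hse
  obtain ⟨m, rho, hm1, heq, hrho, hds, hdT, hdS⟩ := down_spec hin.1 he0
  have hes : eta.sum = m + rho.sum := by rw [heq, Multiset.sum_cons]
  have hcE : Even (down eta).sum := by grind
  obtain ⟨kin, ksum, kdom, kx⟩ := collapse_spec PType.C (down eta) (fun _ => hcE)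
  set K := collapse PType.C (down eta) with hK
  have hfin : Even (transpose (nu + K)).sum := by
    rw [sum_transpose, Multiset.sum_add, ksum]; exact hse.2.add hcE
  obtain ⟨gin, gsum, gdom, gx⟩ := collapse_spec PType.C (transpose (nu + K)) (fun _ => hfin)
  change _ ↔ _ ≤ psum (collapse PType.C (transpose (nu + K))) j
  have g1 := gdom j
  have g2 := gx j (TT (nu + eta) j)
  rw [psum_transpose, TT_add] at g1 g2
  rw [height_add] at hh
  have sE := InP_SS hin j
  have sL := InP_SS h.1 j
  have tL := TT_SS (nu + eta) j
  simp only [tw, one_mul] at sE sL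
  simp only [tw, zero_mul, add_zero] at g2
  have hSr : j ≤ m → SS rho j = rho.sum := by
    intro hjm
    unfold SS
    rw [Multiset.filter_eq_self.2]
    intro a ha; have := hrho a ha; omega
  have eS : SS eta j = (if j ≤ m then m else 0) + SS rho j := by rw [heq, SS_cons]
  have eT : TT eta j = min m j + TT rho j := by rw [heq, TT_cons]
  have dT := hdT j
  have dS' := hdS j hj
  rw [TT_add] at g2 tL ⊢
  have hsum := h.2.1
  simp only [sumParity] at hsum
  have jE : Even (j * height (nu + eta) j) := hje.mul_right _
  rw [height_add] at sL tL jE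
  constructor
  · intro hn
    apply g2
    · have kd := TT_of_dom ksum kdom j
      have tK := TT_SS K j
      have sK := InP_SS kin j
      have jK : Even (j * height K j) := hje.mul_right _
      have tD := TT_SS (down eta) j
      have jD : Even (j * height (down eta) j) := hje.mul_right _
      simp only [tw, zero_mul, add_zero] at sK
      by_cases hjm : j < m
      · omega
      · have hodd : Odd (SS (down eta) j) := by
          rw [if_neg (by omega), zero_add] at dS'
          rcases Nat.lt_or_eq_of_le (not_lt.1 hjm) with hlt | hlt
          · rw [if_neg (by omega)] at eS
            grind
          · have := hSr hlt.ge
            grind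
        have : TT K j ≠ TT (down eta) j := by
          intro hq
          grind
        omega
    · grind
  · intro hle
    by_contra hn
    rw [Nat.not_even_iff_odd] at hn
    have hjm : m < j := by
      by_contra hc
      have := hSr (by omega)
      rw [if_pos (by omega)] at eS
      grind
    have : TT K j ≤ TT (down eta) j := by
      apply TT_collapse_le _ _ (fun _ => hcE)
      simp only [tw, zero_mul, add_zero]
      rw [if_neg (by omega)] at eS dS'
      grind
    omega

theorem key_C (nu eta : Ptn) (h : IsMarked PType.C nu eta) (he0 : eta ≠ 0) (j : ℕ) (hj : 1 ≤ j)
    (hje : Odd j) (hh : Even (height (nu + eta) j)) :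
    Even (height nu j) ↔ TT (nu + eta) j + 1 ≤ psum (dS PType.C nu eta) j := by
  have hin := InP_eta h
  have hse : Even eta.sum ∧ Even nu.sum := by
    have h1 := h.2.1
    have h2 := even_sum_of_even (fun a ha => (h.2.2.1 a ha).2 : ∀ a ∈ nu, Even a)
    simp [sumParity] at h1
    grind
  obtain ⟨m, rho, heq, hrho, hup⟩ := up_spec he0
  have hes : eta.sum = m + rho.sum := by rw [heq, Multiset.sum_cons]
  have hus : (up eta).sum = m + 1 + rho.sum := by rw [hup, Multiset.sum_cons]
  obtain ⟨kin, ksum, kdom, kx⟩ := collapse_spec PType.B (up eta) (by simp)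
  set K := collapse PType.B (up eta) with hK
  obtain ⟨gin, gsum, gdom, gx⟩ := collapse_spec PType.B (transpose (nu + K)) (by simp)
  change _ ↔ _ ≤ psum (collapse PType.B (transpose (nu + K))) j
  have g1 := gdom j
  have g2 := gx j (TT (nu + eta) j + 1)
  rw [psum_transpose, TT_add] at g1 g2
  rw [height_add] at hh
  have sE := InP_SS hin j
  have sL := InP_SS h.1 j
  have tL := TT_SS (nu + eta) j
  have tE := TT_SS eta j
  simp only [tw, zero_mul, add_zero] at sE sL
  simp only [tw, one_mul] at g2
  have eS : SS eta j = (if j ≤ m then m else 0) + SS rho j := by rw [heq, SS_cons]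
  have eT : TT eta j = min m j + TT rho j := by rw [heq, TT_cons]
  have eH : height eta j = (if j ≤ m then 1 else 0) + height rho j := by rw [heq, height_cons]
  have uS : SS (up eta) j = (if j ≤ m + 1 then m + 1 else 0) + SS rho j := by rw [hup, SS_cons]
  have uT : TT (up eta) j = min (m + 1) j + TT rho j := by rw [hup, TT_cons]
  have uH : height (up eta) j = (if j ≤ m + 1 then 1 else 0) + height rho j := by
    rw [hup, height_cons]
  rw [TT_add] at g2 tL ⊢
  rw [height_add] at tL
  have hsum := h.2.1
  simp only [sumParity] at hsum
  have jp : ∀ x, Even (j * x) ↔ Even x := by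
    intro x; rw [Nat.even_mul]; grind
  have jL := jp (height nu j + height eta j)
  have jE := jp (height eta j)
  constructor
  · intro hn
    apply g2
    · have kd := TT_of_dom ksum kdom j
      have tK := TT_SS K j
      have sK := InP_SS kin j
      have jK := jp (height K j)
      simp only [tw, one_mul] at sK
      have : TT K j ≠ TT eta j := by
        intro hq
        grind
      omega
    · grind
  · intro hle
    by_contra hn
    rw [Nat.not_even_iff_odd] at hn
    have hjm : j ≤ m := by
      by_contra hc
      have : height rho j = 0 := by
        unfold height
        rw [Multiset.card_eq_zero, Multiset.filter_eq_nil]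
        intro p hp
        have := hrho p hp
        omega
      rw [if_neg hc] at eH
      grind
    rw [if_pos (by omega)] at eS eH uS uH
    have : TT K j ≤ TT (up eta) j := by
      apply TT_collapse_le _ _ (by simp)
      simp only [tw, one_mul]
      grind
    omega

theorem key_D (nu eta : Ptn) (h : IsMarked PType.D nu eta) (j : ℕ) (hj : 1 ≤ j) (hje : Even j)
    (hh : Even (height (nu + eta) j)) :
    Even (height nu j) ↔ TT (nu + eta) j ≤ psum (dS PType.D nu eta) j := by
  have hin := InP_eta h
  have hse : Even eta.sum ∧ Even nu.sum := by
    have h1 := h.2.1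
    have h2 := sum_card_of_odd (fun a ha => (h.2.2.1 a ha).2 : ∀ a ∈ nu, Odd a)
    have h3 := h.2.2.2 (Or.inr rfl)
    simp [sumParity] at h1
    grind
  obtain ⟨kin, ksum, kdom, kx⟩ := collapse_spec PType.D (transpose eta) (by simp)
  set K := collapse PType.D (transpose eta) with hK
  obtain ⟨gin, gsum, gdom, gx⟩ := collapse_spec PType.D (transpose (nu + transpose K)) (by simp)
  change _ ↔ _ ≤ psum (collapse PType.D (transpose (nu + transpose K))) j
  have g1 := gdom j
  have g2 := gx j (TT (nu + eta) j)
  rw [psum_transpose, TT_add nu (transpose K), TT_transpose] at g1 g2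
  rw [height_add] at hh
  have sE := InP_SS hin j
  have sL := InP_SS h.1 j
  have tL := TT_SS (nu + eta) j
  have tE := TT_SS eta j
  simp only [tw, one_mul] at sE sL g2
  rw [TT_add] at g2 tL ⊢
  have hsum := h.2.1
  simp only [sumParity] at hsum
  have jL : Even (j * height (nu + eta) j) := hje.mul_right _
  have jE : Even (j * height eta j) := hje.mul_right _
  rw [height_add] at sL tL jL
  have kx' := kx j (TT eta j)
  rw [psum_transpose] at kx'
  simp only [tw, one_mul] at kx'
  constructor
  · intro hn
    apply g2
    · have := kx' le_rfl (by grind)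
      omega
    · grind
  · intro hle
    by_contra hn
    rw [Nat.not_even_iff_odd] at hn
    obtain ⟨i, rfl⟩ : ∃ i, j = i + 1 := ⟨j - 1, by omega⟩
    have k0 := kdom i
    have k1 := kdom (i + 1)
    have k2 := kdom (i + 1 + 1)
    rw [psum_transpose] at k0 k1 k2
    have hE : psum K (i + 1) = TT eta (i + 1) := by omega
    have fl := InP_flat kin i (by
      simp only [tw, one_mul]
      rw [hE]
      grind)
    simp only [tw] at fl
    have t1 := TT_succ eta i
    have t2 := TT_succ eta (i + 1)
    have p1 := psum_succ K i
    have p2 := psum_succ K (i + 1)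
    have a1 := height_anti eta (show i + 1 ≤ i + 1 + 1 by omega)
    have : height eta (i + 1) = pt K i := by omega
    grind

theorem eq_of_parity {nu nu' : Ptn} (h : ∀ a ∈ nu, nu.count a = 1) (h' : ∀ a ∈ nu', nu'.count a = 1)
    (hp : ∀ a, (a ∈ nu ∨ a ∈ nu') → (Even (height nu a) ↔ Even (height nu' a))) : nu = nu' := by
  have key : ∀ n a, nu.sum + nu'.sum + 1 - a ≤ n → height nu a = height nu' a := by
    intro n
    induction n with
    | zero =>
      intro a ha
      rw [height_large nu (by omega), height_large nu' (by omega)]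
    | succ n ih =>
      intro a ha
      by_cases hla : nu.sum + nu'.sum + 1 ≤ a
      · rw [height_large nu (by omega), height_large nu' (by omega)]
      have e := ih (a + 1) (by omega)
      have s1 := height_succ nu a
      have s2 := height_succ nu' a
      by_cases m1 : a ∈ nu <;> by_cases m2 : a ∈ nu'
      · have := h a m1; have := h' a m2; omega
      · have := h a m1
        have := Multiset.count_eq_zero_of_notMem m2
        have := hp a (Or.inl m1)
        grind
      · have := h' a m2
        have := Multiset.count_eq_zero_of_notMem m1
        have := hp a (Or.inr m2)
        grind
      · have := Multiset.count_eq_zero_of_notMem m1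
        have := Multiset.count_eq_zero_of_notMem m2
        omega
  ext a
  have s1 := height_succ nu a
  have s2 := height_succ nu' a
  have := key _ a le_rfl
  have := key _ (a + 1) le_rfl
  omega

theorem height_one {nu : Ptn} (h : IsPartition nu) : height nu 1 = Multiset.card nu := by
  unfold height
  rw [Multiset.filter_eq_self.2]
  intro a ha; exact h a ha

/-- Theorem 5.1 of the paper: for two reduced marked partitions with the same underlying
partition, the Sommers duals agree if and only if the markings agree. -/
theorem dS_injective_on_reduced_markings (X : PType) (nu eta nu' eta' : Ptn)
    (heq : nu + eta = nu' + eta')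
    (h : IsMarked X nu eta) (h' : IsMarked X nu' eta')
    (hr : Reduced X (nu + eta) nu) (hr' : Reduced X (nu' + eta') nu')
    (hC : X = PType.C → eta ≠ 0 ∧ eta' ≠ 0) :
    dS X nu eta = dS X nu' eta' ↔ nu = nu' := by
  constructor
  · intro hd
    apply eq_of_parity (fun a ha => (h.2.2.1 a ha).1) (fun a ha => (h'.2.2.1 a ha).1)
    intro a ha
    have hmk : Markable X (nu + eta) a := by
      rcases ha with ha | ha
      · exact hr a ha
      · rw [heq]; exact hr' a ha
    obtain ⟨hmem, hpar, hht⟩ := hmk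
    have hpos : 0 < a := h.1.1 a hmem
    obtain ⟨j, rfl⟩ : ∃ j, a = j + 1 := ⟨a - 1, by omega⟩
    -- heights at `j` and `j + 1`
    have hnj : ¬ markParity X j := by
      cases X <;> simp only [markParity] at hpar ⊢ <;> grind
    have e1 : height nu j = height nu (j + 1) :=
      height_parity_of_mark (fun hm => hnj (h.2.2.1 j hm).2)
    have e2 : height nu' j = height nu' (j + 1) :=
      height_parity_of_mark (fun hm => hnj (h'.2.2.1 j hm).2)
    have hbad : badPart X j := by
      cases X <;> simp only [markParity, badPart] at hpar ⊢ <;> grind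
    have e3 := h.1.2 j hbad
    have e4 := height_succ (nu + eta) j
    have e5 : Even (height (nu + eta) j) ↔ Even (height (nu + eta) (j + 1)) := by
      rw [e4, Nat.even_add]; tauto
    by_cases hj : 1 ≤ j
    · rw [← e1, ← e2]
      cases X with
      | B =>
        simp only [badPart] at hbad
        have hh : Odd (height (nu + eta) j) := by
          rw [← Nat.not_even_iff_odd, e5, Nat.not_even_iff_odd]; exact hht
        rw [key_B nu eta h j hj hbad hh, key_B nu' eta' h' j hj hbad (heq ▸ hh), hd, heq]
      | C =>
        simp only [badPart] at hbad
        have hh : Even (height (nu + eta) j) := e5.2 hht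
        obtain ⟨z1, z2⟩ := hC rfl
        rw [key_C nu eta h z1 j hj hbad hh, key_C nu' eta' h' z2 j hj hbad (heq ▸ hh), hd, heq]
      | D =>
        simp only [badPart] at hbad
        have hh : Even (height (nu + eta) j) := e5.2 hht
        rw [key_D nu eta h j hj hbad hh, key_D nu' eta' h' j hj hbad (heq ▸ hh), hd, heq]
    · obtain rfl : j = 0 := by omega
      have hX : X = PType.B ∨ X = PType.D := by
        cases X <;> simp [badPart] at hbad ⊢
      have c1 := h.2.2.2 hX
      have c2 := h'.2.2.2 hX
      rw [zero_add, height_one (fun a ha => h.1.1 a (by simp [ha])),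
        height_one (fun a ha => h'.1.1 a (by simp [ha]))]
      tauto
  · rintro rfl
    rw [add_left_cancel heq]

end NilDual
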